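/- Every k-list-critical graph G with G ≠ K_k and k ≥ 4 has average degree at least k−1 + (k−3)/(k²−2k+2); equivalently, 2·e(G) ≥ (k−1 + (k−3)/(k²−2k+2))·|V(G)| + 2/(k²−2k+2). -/

import Mathlib

open SimpleGraph

namespace Paper

variable {V : Type*} {W : Type*}

/-- `s` is an independent set in `G`. -/
def IsIndepSet (G : SimpleGraph V) (s : Set V) : Prop :=
  ∀ ⦃u⦄, u ∈ s → ∀ ⦃v⦄, v ∈ s → ¬ G.Adj u v

/-- The independence number of `G`. -/
noncomputable def indepNum (G : SimpleGraph V) : ℕ :=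
  sSup {n | ∃ s : Finset V, IsIndepSet G ↑s ∧ s.card = n}

/-- The number of edges of `G`. -/
noncomputable def edgeCount (G : SimpleGraph V) : ℕ := Nat.card G.edgeSet

/-- The degree of a vertex. -/
noncomputable def deg (G : SimpleGraph V) (v : V) : ℕ := Nat.card (G.neighborSet v)

/-- The number of edges with exactly one endpoint in `I`. -/
noncomputable def crossCount (G : SimpleGraph V) (I : Set V) : ℕ :=
  Nat.card {p : V × V // p.1 ∈ I ∧ p.2 ∉ I ∧ G.Adj p.1 p.2}

/-- The maximum independent cover number of `G`. -/
noncomputable def mic (G : SimpleGraph V) : ℕ :=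
  sSup {n | ∃ I : Set V, IsIndepSet G I ∧ crossCount G I = n}

/-- A graph is an odd cycle iff it is connected, 2-regular, with an odd number of vertices. -/
def IsOddCycle (H : SimpleGraph W) : Prop :=
  H.Connected ∧ (∀ v, deg H v = 2) ∧ Odd (Nat.card W)

/-- `B` is a block of `G`: a maximal set inducing a connected subgraph with no cutvertex. -/
def IsBlock (G : SimpleGraph V) (B : Set V) : Prop :=
  ((G.induce B).Connected ∧ ∀ v ∈ B, (G.induce (B \ {v})).Connected) ∧
    ∀ B' : Set V, B ⊆ B' →
      ((G.induce B').Connected ∧ ∀ v ∈ B', (G.induce (B' \ {v})).Connected) → B' = B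

/-- A Gallai tree: a connected graph each of whose blocks is complete or an odd cycle. -/
def IsGallaiTree (G : SimpleGraph V) : Prop :=
  G.Connected ∧ ∀ B : Set V, IsBlock G B → (G.induce B = ⊤ ∨ IsOddCycle (G.induce B))

/-- `G` is `r`-choosable: every assignment of lists of size `r` admits a proper coloring. -/
def Choosable (G : SimpleGraph V) (r : ℕ) : Prop :=
  ∀ L : V → Finset ℕ, (∀ v, (L v).card = r) →
    ∃ c : V → ℕ, (∀ v, c v ∈ L v) ∧ ∀ ⦃u v⦄, G.Adj u v → c u ≠ c v

/-- `G` is `k`-list-critical: not `(k-1)`-choosable but every proper subgraph is. -/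
def ListCritical (k : ℕ) (G : SimpleGraph V) : Prop :=
  ¬ Choosable G (k - 1) ∧ ∀ H : G.Subgraph, H ≠ ⊤ → Choosable H.coe (k - 1)

end Paper

open Paper

/-!
Fix lists of size `d = k - 1` from which `G` cannot be colored, let `X` be the set of vertices of
degree `d`, and call the other vertices high. An independent set spanning many edges to its
complement forces many edges by kernel magic, so we look for one whose vertices have large total
degree.

Every nonseparable subgraph of `G[X]` is regular, of degree less than `d` by Brooks' theorem.
Peeling minimal lobes (end blocks without their cutvertex) off `G[X]` therefore shows that `G[X]` is
sparse, up to a surplus that is paid for by an independent set `J` of vertices all of whose `d`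
neighbors lie in `X`. Such a `J` can be enlarged by any independent set of high vertices, and there
is a large one unless the high vertices span many edges. If `G[X]` is sparse, many edges join `X` to
the high vertices. Weighing these inequalities against each other gives the bound.
-/

namespace Paper

open Finset

section Degrees

variable {V : Type*} (G : SimpleGraph V)

open scoped Classical in
/-- The number of neighbors of `v` in `X`; for `v ∈ X` it is the degree of `v` in `G[X]`. -/
noncomputable def degIn (X : Finset V) (v : V) : ℕ := #{u ∈ X | G.Adj v u}

/-- The sum of the degrees of `G[X]`, that is, twice its number of edges. -/
noncomputable def degSum (X : Finset V) : ℕ := ∑ v ∈ X, degIn G X v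

lemma degIn_mono {X Y : Finset V} (h : X ⊆ Y) (v : V) : degIn G X v ≤ degIn G Y v := by
  classical exact card_le_card (filter_subset_filter _ h)

lemma degIn_eq_of_subset {X Y : Finset V} {v : V} (h : X ⊆ Y) (hY : ∀ u ∈ Y, G.Adj v u → u ∈ X) :
    degIn G X v = degIn G Y v := by
  classical
  refine (degIn_mono G h v).antisymm (card_le_card fun u hu ↦ ?_)
  obtain ⟨huY, huv⟩ := mem_filter.1 hu
  exact mem_filter.2 ⟨hY u huY huv, huv⟩

lemma degIn_eq_zero {X : Finset V} {v : V} : degIn G X v = 0 ↔ ∀ u ∈ X, ¬ G.Adj v u := by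
  classical rw [degIn, card_eq_zero, filter_eq_empty_iff]

lemma degIn_pos {X : Finset V} {u v : V} (hu : u ∈ X) (huv : G.Adj v u) : 0 < degIn G X v := by
  classical exact card_pos.2 ⟨u, mem_filter.2 ⟨hu, huv⟩⟩

lemma degIn_lt_card {X : Finset V} {v : V} (hv : v ∈ X) : degIn G X v < #X := by
  classical exact card_lt_card (filter_ssubset.2 ⟨v, hv, G.irrefl⟩)

lemma degIn_singleton_of_adj {u v : V} (h : G.Adj v u) : degIn G {u} v = 1 := by
  rw [degIn, filter_singleton, if_pos h, card_singleton]

lemma degIn_singleton_of_not_adj {u v : V} (h : ¬ G.Adj v u) : degIn G {u} v = 0 :=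
  (degIn_eq_zero G).2 fun _ hw ↦ mem_singleton.1 hw ▸ h

lemma degIn_univ [Fintype V] (v : V) : degIn G univ v = deg G v := by
  classical
  rw [deg, Nat.card_eq_fintype_card, card_neighborSet_eq_degree, ← card_neighborFinset_eq_degree,
    neighborFinset_eq_filter, degIn]

lemma degIn_le_deg [Finite V] (X : Finset V) (v : V) : degIn G X v ≤ deg G v := by
  have := Fintype.ofFinite V
  exact degIn_univ G v ▸ degIn_mono G (subset_univ X) v

lemma sum_deg [Fintype V] : ∑ v, deg G v = 2 * edgeCount G := by
  classical
  rw [edgeCount, Nat.card_eq_fintype_card, ← edgeFinset_card, ← sum_degrees_eq_twice_card_edges]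
  exact sum_congr rfl fun v _ ↦ by
    rw [deg, Nat.card_eq_fintype_card, card_neighborSet_eq_degree]

lemma degSum_mono {X Y : Finset V} (h : X ⊆ Y) : degSum G X ≤ degSum G Y :=
  (sum_le_sum fun v _ ↦ degIn_mono G h v).trans (sum_le_sum_of_subset h)

lemma degSum_univ [Fintype V] : degSum G univ = 2 * edgeCount G := by
  simp only [degSum, degIn_univ, sum_deg]

lemma sum_degIn_comm (X Y : Finset V) : ∑ v ∈ X, degIn G Y v = ∑ v ∈ Y, degIn G X v := by
  classical
  have h := sum_card_bipartiteAbove_eq_sum_card_bipartiteBelow (s := X) (t := Y) G.Adj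
  simpa only [bipartiteAbove, bipartiteBelow, G.adj_comm, degIn] using h

variable [DecidableEq V]

lemma degIn_union {X Y : Finset V} (h : Disjoint X Y) (v : V) :
    degIn G (X ∪ Y) v = degIn G X v + degIn G Y v := by
  classical
  rw [degIn, filter_union, card_union_of_disjoint (disjoint_filter_filter h), degIn, degIn]

lemma degIn_add_degIn_sdiff {X Y : Finset V} (h : X ⊆ Y) (v : V) :
    degIn G X v + degIn G (Y \ X) v = degIn G Y v := by
  rw [← degIn_union G disjoint_sdiff, union_sdiff_of_subset h]

lemma degIn_add_degIn_erase {X : Finset V} {u : V} (hu : u ∈ X) (v : V) :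
    degIn G {u} v + degIn G (X.erase u) v = degIn G X v := by
  rw [← sdiff_singleton_eq_erase, degIn_add_degIn_sdiff G (singleton_subset_iff.2 hu)]

lemma degSum_add_sum_degIn_sdiff {X Y : Finset V} (h : X ⊆ Y) :
    degSum G X + ∑ v ∈ X, degIn G (Y \ X) v = ∑ v ∈ X, degIn G Y v := by
  simp only [← degIn_add_degIn_sdiff G h, sum_add_distrib, degSum]

lemma degSum_add_degSum_sdiff {X Y : Finset V} (h : X ⊆ Y) :
    degSum G X + degSum G (Y \ X) + 2 * ∑ v ∈ X, degIn G (Y \ X) v = degSum G Y := by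
  have hX := degSum_add_sum_degIn_sdiff G h
  have hYX := degSum_add_sum_degIn_sdiff G (sdiff_subset : Y \ X ⊆ Y)
  rw [Finset.sdiff_sdiff_eq_self h, sum_degIn_comm G (Y \ X) X] at hYX
  rw [degSum.eq_1 G Y, ← sum_sdiff h]
  omega

end Degrees

section IndependentSets

variable {V : Type*} {G : SimpleGraph V} {s t : Set V}

lemma isIndepSet_empty : IsIndepSet G ∅ := fun _ hu ↦ hu.elim

lemma IsIndepSet.union (hs : IsIndepSet G s) (ht : IsIndepSet G t)
    (hst : ∀ u ∈ s, ∀ v ∈ t, ¬ G.Adj u v) : IsIndepSet G (s ∪ t) := by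
  rintro u (hu | hu) v (hv | hv)
  exacts [hs hu hv, hst u hu v hv, fun huv ↦ hst v hv u hu huv.symm, ht hu hv]

lemma IsIndepSet.insert {u : V} (hs : IsIndepSet G s) (hu : ∀ v ∈ s, ¬ G.Adj u v) :
    IsIndepSet G (insert u s) := by
  rw [← Set.singleton_union]
  refine IsIndepSet.union ?_ hs (by simpa using hu)
  rintro _ rfl _ rfl
  exact G.irrefl

end IndependentSets

section ListColorings

variable {V α : Type*} {G : SimpleGraph V} {L : V → Finset α} {X : Finset V}

/-- `c` restricts to a proper coloring of `G[X]` with colors from the lists `L`; its values outside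
`X` play no role. -/
structure IsListColoringOn (G : SimpleGraph V) (L : V → Finset α) (X : Finset V) (c : V → α) :
    Prop where
  mem : ∀ ⦃v⦄, v ∈ X → c v ∈ L v
  ne : ∀ ⦃u⦄, u ∈ X → ∀ ⦃v⦄, v ∈ X → G.Adj u v → c u ≠ c v

/-- `G[X]` is colorable from the lists `L`. -/
def ListColorableOn (G : SimpleGraph V) (L : V → Finset α) (X : Finset V) : Prop :=
  ∃ c, IsListColoringOn G L X c

lemma listColorableOn_empty [Nonempty α] : ListColorableOn G L ∅ :=
  ⟨fun _ ↦ Classical.arbitrary α, by simp, by simp⟩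

lemma IsIndepSet.isListColoringOn_const {a : α} (hX : IsIndepSet G (X : Set V))
    (ha : ∀ v ∈ X, a ∈ L v) : IsListColoringOn G L X fun _ ↦ a :=
  ⟨ha, fun _ hu _ hv huv ↦ absurd huv (hX hu hv)⟩

lemma IsListColoringOn.piecewise [DecidableEq V] {Y : Finset V} {c c' : V → α}
    (hc : IsListColoringOn G L X c) (hc' : IsListColoringOn G L (Y \ X) c')
    (hcc' : ∀ u ∈ X, ∀ v ∈ Y \ X, G.Adj u v → c u ≠ c' v) :
    IsListColoringOn G L Y (X.piecewise c c') := by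
  refine ⟨fun v hv ↦ ?_, fun u hu v hv huv ↦ ?_⟩
  · by_cases hvX : v ∈ X
    · simpa only [piecewise_eq_of_mem _ _ _ hvX] using hc.mem hvX
    · simpa only [piecewise_eq_of_notMem _ _ _ hvX] using hc'.mem (mem_sdiff.2 ⟨hv, hvX⟩)
  · by_cases huX : u ∈ X <;> by_cases hvX : v ∈ X <;>
      simp only [huX, hvX, not_false_eq_true, piecewise_eq_of_mem, piecewise_eq_of_notMem]
    · exact hc.ne huX hvX huv
    · exact hcc' u huX v (mem_sdiff.2 ⟨hv, hvX⟩) huv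
    · exact (hcc' v hvX u (mem_sdiff.2 ⟨hu, huX⟩) huv.symm).symm
    · exact hc'.ne (mem_sdiff.2 ⟨hu, huX⟩) (mem_sdiff.2 ⟨hv, hvX⟩) huv

lemma ListColorableOn.exists_residual_lists [DecidableEq V] {Y : Finset V}
    (h : ListColorableOn G L (Y \ X)) :
    ∃ L' : V → Finset α, (∀ v, #(L v) ≤ #(L' v) + degIn G (Y \ X) v) ∧
      (ListColorableOn G L' X → ListColorableOn G L Y) := by
  classical
  obtain ⟨c, hc⟩ := h
  let used (v : V) : Finset α := {u ∈ Y \ X | G.Adj v u}.image c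
  refine ⟨fun v ↦ L v \ used v, fun v ↦ ?_, fun ⟨c', hc'⟩ ↦ ⟨X.piecewise c' c, ?_⟩⟩
  · calc #(L v) ≤ #(L v \ used v) + #(used v) := by grind [le_card_sdiff (used v) (L v)]
      _ ≤ #(L v \ used v) + degIn G (Y \ X) v := by
        gcongr
        exact card_image_le.trans_eq (by rw [degIn])
  · refine IsListColoringOn.piecewise ⟨fun v hv ↦ (mem_sdiff.1 (hc'.mem hv)).1, hc'.ne⟩ hc ?_
    intro u hu v hv huv heq
    exact (mem_sdiff.1 (hc'.mem hu)).2
      (mem_image.2 ⟨v, mem_filter.2 ⟨hv, huv⟩, heq.symm⟩)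

/-- Greedy coloring: the vertex provided by the hypothesis is colored last. -/
lemma listColorableOn_of_forall_exists_degIn_lt [Nonempty α]
    (h : ∀ P ⊆ X, P.Nonempty → ∃ a ∈ P, degIn G P a < #(L a)) : ListColorableOn G L X := by
  classical
  induction X using Finset.strongInduction with
  | H X ih =>
    rcases X.eq_empty_or_nonempty with rfl | hX
    · exact listColorableOn_empty
    obtain ⟨a, haX, ha⟩ := h X subset_rfl hX
    have hrest : ListColorableOn G L (X \ {a}) :=
      ih _ (sdiff_ssubset (singleton_subset_iff.2 haX) (singleton_nonempty a))
        fun P hP ↦ h P (hP.trans sdiff_subset)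
    obtain ⟨L', hL', hext⟩ := hrest.exists_residual_lists
    have hpos : 0 < #(L' a) := by
      have := hL' a
      have := degIn_mono G (sdiff_subset : X \ {a} ⊆ X) a
      omega
    obtain ⟨x, hx⟩ := card_pos.1 hpos
    refine hext ⟨_, IsIndepSet.isListColoringOn_const (a := x) ?_ (by simpa using hx)⟩
    simpa using (isIndepSet_empty (G := G)).insert (u := a) (by simp)

end ListColorings

section Connectivity

variable {V : Type*} {G : SimpleGraph V} {X : Finset V}

lemma exists_adj_of_induce_preconnected [DecidableEq V]
    (hX : (G.induce (X : Set V)).Preconnected)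
    {P : Finset V} (hPX : P ⊆ X) (hP : P.Nonempty) (hPc : (X \ P).Nonempty) :
    ∃ a ∈ P, ∃ b ∈ X \ P, G.Adj a b := by
  obtain ⟨u, hu⟩ := hP
  obtain ⟨w, hw⟩ := hPc
  rw [mem_sdiff] at hw
  obtain ⟨p⟩ := hX ⟨u, hPX hu⟩ ⟨w, hw.1⟩
  obtain ⟨e, -, he₁, he₂⟩ := p.exists_boundary_dart {z | z.1 ∈ P} hu hw.2
  exact ⟨e.fst, he₁, e.snd, mem_sdiff.2 ⟨e.snd.2, he₂⟩, e.adj⟩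

lemma induce_preconnected_of_forall_exists_adj [DecidableEq V]
    (h : ∀ P ⊆ X, P.Nonempty → (X \ P).Nonempty → ∃ a ∈ P, ∃ b ∈ X \ P, G.Adj a b) :
    (G.induce (X : Set V)).Preconnected := by
  classical
  intro u w
  by_contra huw
  let reached : Finset V := {z ∈ X | ∃ hz : z ∈ (X : Set V), (G.induce X).Reachable u ⟨z, hz⟩}
  obtain ⟨a, ha, b, hb, hab⟩ := h reached (filter_subset _ _)
    ⟨u, mem_filter.2 ⟨u.2, u.2, .rfl⟩⟩
    ⟨w, mem_sdiff.2 ⟨w.2, fun hw ↦ huw (mem_filter.1 hw).2.2⟩⟩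
  obtain ⟨-, ha', hua⟩ := mem_filter.1 ha
  obtain ⟨hbX, hb⟩ := mem_sdiff.1 hb
  have hab' : (G.induce (X : Set V)).Adj ⟨a, ha'⟩ ⟨b, hbX⟩ := hab
  exact hb (mem_filter.2 ⟨hbX, hbX, hua.trans hab'.reachable⟩)

/-- Of a set and its complement in `X`, one misses the root `x`, so only sets missing `x` have to
be tested. -/
lemma induce_preconnected_of_forall_notMem_exists_adj [DecidableEq V] (x : V)
    (h : ∀ P ⊆ X, P.Nonempty → x ∉ P → (X \ P).Nonempty → ∃ a ∈ P, ∃ b ∈ X \ P, G.Adj a b) :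
    (G.induce (X : Set V)).Preconnected := by
  refine induce_preconnected_of_forall_exists_adj fun P hPX hP hPc ↦ ?_
  by_cases hxP : x ∈ P
  · have hcc : X \ (X \ P) = P := Finset.sdiff_sdiff_eq_self hPX
    obtain ⟨b, hb, a, ha, hba⟩ :=
      h (X \ P) sdiff_subset hPc (by simp [hxP]) (by rwa [hcc])
    exact ⟨a, hcc ▸ ha, b, hb, hba.symm⟩
  · exact h P hPX hP hxP hPc

lemma eq_of_induce_preconnected {β : Type*} (hX : (G.induce (X : Set V)).Preconnected) {f : V → β}
    (hf : ∀ u ∈ X, ∀ v ∈ X, G.Adj u v → f u = f v) {u v : V} (hu : u ∈ X) (hv : v ∈ X) :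
    f u = f v := by
  classical
  by_contra huv
  obtain ⟨a, ha, b, hb, hab⟩ := exists_adj_of_induce_preconnected hX
    (filter_subset (fun w ↦ f w = f u) X) ⟨u, by simp [hu]⟩ ⟨v, by simp [hv, Ne.symm huv]⟩
  simp only [mem_filter, mem_sdiff, not_and] at ha hb
  exact hb.2 hb.1 ((hf a ha.1 b hb.1 hab).symm.trans ha.2)

/-- `G[B]` is connected (or empty) and has no cutvertex. -/
structure IsNonseparable [DecidableEq V] (G : SimpleGraph V) (B : Finset V) : Prop where
  preconnected : (G.induce (B : Set V)).Preconnected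
  preconnected_erase : ∀ v ∈ B, (G.induce (B.erase v : Set V)).Preconnected

lemma isNonseparable_singleton [DecidableEq V] {x : V} : IsNonseparable G {x} where
  preconnected := by
    rw [coe_singleton]
    exact .of_subsingleton
  preconnected_erase v hv := by
    rw [mem_singleton.1 hv, erase_singleton, coe_empty]
    exact .of_subsingleton

end Connectivity

section Lobes

variable {V : Type*} {G : SimpleGraph V} {X C D P : Finset V} {v x : V}

/-- `C` is a nonempty union of components of `G[X] - x`. -/
structure IsLobe (G : SimpleGraph V) (X : Finset V) (x : V) (C : Finset V) : Prop where
  nonempty : C.Nonempty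
  subset : C ⊆ X
  root_mem : x ∈ X
  root_notMem : x ∉ C
  mem_or_eq : ∀ a ∈ C, ∀ b ∈ X, G.Adj a b → b ∈ C ∨ b = x

variable [DecidableEq V]

lemma isLobe_erase (hv : v ∈ X) (hX : (X.erase v).Nonempty) : IsLobe G X v (X.erase v) where
  nonempty := hX
  subset := erase_subset v X
  root_mem := hv
  root_notMem := notMem_erase v X
  mem_or_eq _ _ b hb _ := by simp [hb, em']

lemma exists_disjoint_isLobe (hx : x ∈ X)
    (hX : ¬ (G.induce (X.erase x : Set V)).Preconnected) :
    ∃ C D, Disjoint C D ∧ IsLobe G X x C ∧ IsLobe G X x D := by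
  obtain ⟨P, hPX, hP, hPc, hno⟩ : ∃ P ⊆ X.erase x, P.Nonempty ∧ (X.erase x \ P).Nonempty ∧
      ∀ a ∈ P, ∀ b ∈ X.erase x \ P, ¬ G.Adj a b := by
    contrapose! hX
    exact induce_preconnected_of_forall_exists_adj hX
  refine ⟨P, X.erase x \ P, disjoint_sdiff,
    ⟨hP, hPX.trans (erase_subset _ _), hx, fun h ↦ notMem_erase x X (hPX h), ?_⟩,
    ⟨hPc, sdiff_subset.trans (erase_subset _ _), hx, by simp, ?_⟩⟩
  · intro a ha b hb hab
    by_contra! hb'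
    exact hno a ha b (by simp [hb, hb']) hab
  · intro a ha b hb hab
    by_contra! hb'
    have hbP : b ∈ P := by simpa [hb, hb'.2] using hb'.1
    exact hno b hbP a ha hab.symm

namespace IsLobe

lemma degIn_insert (hC : IsLobe G X x C) {c : V} (hc : c ∈ C) :
    degIn G (insert x C) c = degIn G X c :=
  degIn_eq_of_subset G (insert_subset hC.root_mem hC.subset) fun u hu hcu ↦
    mem_insert.2 (hC.mem_or_eq c hc u hu hcu).symm

/-- Minimality says that `P` is not a lobe at `v`, so `P` has an edge to a vertex other than `v`. -/
lemma exists_adj_of_minimal (hC : IsLobe G X x C)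
    (hmin : ∀ y P, IsLobe G X y P → P ⊆ C → P = C) (hv : v ∈ insert x C) (hPC : P ⊂ C)
    (hP : P.Nonempty) (hvP : v ∉ P) : ∃ a ∈ P, ∃ b ∈ (insert x C).erase v \ P, G.Adj a b := by
  have hvX : v ∈ X := (insert_subset hC.root_mem hC.subset) hv
  have hnot : ¬ IsLobe G X v P := fun h ↦ hPC.ne (hmin v P h hPC.subset)
  obtain ⟨a, ha, b, hb, hab, hbP, hbv⟩ :
      ∃ a ∈ P, ∃ b ∈ X, G.Adj a b ∧ b ∉ P ∧ b ≠ v := by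
    by_contra! h
    exact hnot ⟨hP, hPC.subset.trans hC.subset, hvX, hvP,
      fun a ha b hb hab ↦ or_iff_not_imp_left.2 (h a ha b hb hab)⟩
  have hbC := hC.mem_or_eq a (hPC.subset ha) b hb hab
  exact ⟨a, ha, b, by simp [hbP, hbv, hbC.symm], hab⟩

lemma isNonseparable_insert_of_minimal (hC : IsLobe G X x C)
    (hX : (G.induce (X : Set V)).Preconnected)
    (hmin : ∀ y P, IsLobe G X y P → P ⊆ C → P = C) : IsNonseparable G (insert x C) where
  preconnected := by
    refine induce_preconnected_of_forall_notMem_exists_adj x fun P hPB hP hxP _ ↦ ?_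
    have hPC : P ⊆ C := (subset_insert_iff_of_notMem hxP).1 hPB
    rcases hPC.eq_or_ssubset with rfl | hPC
    · obtain ⟨a, ha, b, hb, hab⟩ :=
        exists_adj_of_induce_preconnected hX hC.subset hP ⟨x, by simp [hC.root_mem, hxP]⟩
      obtain ⟨hbX, hbP⟩ := mem_sdiff.1 hb
      obtain rfl := (hC.mem_or_eq a ha b hbX hab).resolve_left hbP
      exact ⟨a, ha, b, by simp [hbP], hab⟩
    · obtain ⟨a, ha, b, hb, hab⟩ :=
        hC.exists_adj_of_minimal hmin (mem_insert_self x C) hPC hP hxP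
      exact ⟨a, ha, b, sdiff_subset_sdiff (erase_subset _ _) subset_rfl hb, hab⟩
  preconnected_erase v hv := by
    refine induce_preconnected_of_forall_notMem_exists_adj x fun P hPB hP hxP hPc ↦ ?_
    have hvP : v ∉ P := fun h ↦ notMem_erase v _ (hPB h)
    have hPC : P ⊆ C := (subset_insert_iff_of_notMem hxP).1 (hPB.trans (erase_subset _ _))
    refine hC.exists_adj_of_minimal hmin hv (hPC.ssubset_of_ne ?_) hP hvP
    rintro rfl
    obtain rfl := (mem_insert.1 hv).resolve_right hvP
    simp [erase_insert hC.root_notMem] at hPc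

lemma exists_isNonseparable (hD : IsLobe G X x D) (hX : (G.induce (X : Set V)).Preconnected) :
    ∃ y, ∃ C ⊆ D, IsLobe G X y C ∧ IsNonseparable G (insert y C) := by
  obtain ⟨C, hCD, ⟨y, hC⟩, hmin⟩ :=
    exists_minimal_le_of_wellFoundedLT (fun C ↦ ∃ y, IsLobe G X y C) D ⟨x, hD⟩
  exact ⟨y, C, hCD, hC, hC.isNonseparable_insert_of_minimal hX
    fun z P hP hPC ↦ hPC.antisymm (hmin ⟨z, hP⟩ hPC)⟩

end IsLobe

end Lobes

section DegreeChoosability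

variable {V α : Type*} {G : SimpleGraph V} {L : V → Finset α} {X : Finset V}

lemma listColorableOn_of_induce_preconnected [Nonempty α]
    (hX : (G.induce (X : Set V)).Preconnected) (hL : ∀ v ∈ X, degIn G X v ≤ #(L v)) {u : V}
    (hu : u ∈ X) (hLu : degIn G X u < #(L u)) : ListColorableOn G L X := by
  classical
  refine listColorableOn_of_forall_exists_degIn_lt fun P hPX hP ↦ ?_
  rcases hPX.eq_or_ssubset with rfl | hPX
  · exact ⟨u, hu, hLu⟩
  · obtain ⟨a, ha, b, hb, hab⟩ :=
      exists_adj_of_induce_preconnected hX hPX.subset hP (sdiff_nonempty.2 hPX.not_subset)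
    refine ⟨a, ha, ?_⟩
    have := degIn_add_degIn_sdiff G hPX.subset a
    have := degIn_pos G hb hab
    have := hL a (hPX.subset ha)
    omega

variable [DecidableEq V]

open scoped Classical in
lemma listColorableOn_of_erase {v : V} {x : α} (hx : x ∈ L v)
    (h : ListColorableOn G (fun w ↦ if G.Adj w v then (L w).erase x else L w) (X.erase v)) :
    ListColorableOn G L X := by
  obtain ⟨c, hc⟩ := h
  have hc_mem : ∀ w ∈ X.erase v, c w ∈ L w ∧ (G.Adj w v → c w ≠ x) := by
    intro w hw
    have := hc.mem hw
    grind
  refine ⟨_, IsListColoringOn.piecewise (X := {v}) (c := fun _ ↦ x) (c' := c) ?_ ?_ ?_⟩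
  · refine IsIndepSet.isListColoringOn_const ?_ (by simpa using hx)
    simpa using (isIndepSet_empty (G := G)).insert (u := v) (by simp)
  · rw [sdiff_singleton_eq_erase]
    exact ⟨fun w hw ↦ (hc_mem w hw).1, hc.ne⟩
  · rw [sdiff_singleton_eq_erase]
    intro w hw z hz hwz
    rw [mem_singleton] at hw
    exact ((hc_mem z hz).2 (hw ▸ hwz.symm)).symm

variable [Nonempty α]

/-- Otherwise color `v` with a color missing at its neighbor `u`, which leaves `u` with a spare
color in the connected graph `G[X] - v`. -/
lemma IsNonseparable.subset_of_adj (hX : IsNonseparable G X)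
    (hL : ∀ v ∈ X, degIn G X v ≤ #(L v)) (hbad : ¬ ListColorableOn G L X) {u v : V} (hu : u ∈ X)
    (hv : v ∈ X) (huv : G.Adj u v) : L v ⊆ L u := by
  classical
  intro x hxv
  by_contra hxu
  let L' (w : V) : Finset α := if G.Adj w v then (L w).erase x else L w
  have hL' : ∀ w ∈ X.erase v, degIn G (X.erase v) w ≤ #(L' w) := by
    intro w hw
    have hLw := hL w (mem_of_mem_erase hw)
    have hdeg := degIn_add_degIn_erase G hv w
    by_cases hwv : G.Adj w v
    · rw [degIn_singleton_of_adj G hwv] at hdeg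
      have := pred_card_le_card_erase (s := L w) (a := x)
      simp only [L', if_pos hwv]
      omega
    · simp only [L', if_neg hwv]
      omega
  have hu' : degIn G (X.erase v) u < #(L' u) := by
    have hLu := hL u hu
    have hdeg := degIn_add_degIn_erase G hv u
    rw [degIn_singleton_of_adj G huv] at hdeg
    simp only [L', if_pos huv, erase_eq_of_notMem hxu]
    omega
  exact hbad (listColorableOn_of_erase hxv (listColorableOn_of_induce_preconnected
    (hX.preconnected_erase v hv) hL' (mem_erase.2 ⟨huv.ne, hu⟩) hu'))

/-- The part of the theorem of Borodin and Erdős–Rubin–Taylor (the obstructions to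
degree-choosability are the Gallai trees) that the edge bound needs. -/
lemma IsNonseparable.degIn_eq (hX : IsNonseparable G X) (hL : ∀ v ∈ X, degIn G X v ≤ #(L v))
    (hbad : ¬ ListColorableOn G L X) {u v : V} (hu : u ∈ X) (hv : v ∈ X) :
    degIn G X u = degIn G X v := by
  have hcard : ∀ w ∈ X, #(L w) = degIn G X w := fun w hw ↦ by
    refine (eq_of_le_of_not_lt (hL w hw) fun hlt ↦ hbad ?_).symm
    exact listColorableOn_of_induce_preconnected hX.preconnected hL hw hlt
  refine eq_of_induce_preconnected hX.preconnected (fun a ha b hb hab ↦ ?_) hu hv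
  rw [← hcard a ha, ← hcard b hb, (hX.subset_of_adj hL hbad ha hb hab).antisymm
    (hX.subset_of_adj hL hbad hb ha hab.symm)]

end DegreeChoosability

section Kernels

variable {V α : Type*} {G : SimpleGraph V} {O : V → V → Prop}

/-- `K` is a kernel of the digraph on `Y` with arc relation `O`: no two of its vertices are adjacent
in the underlying graph `G`, and every other vertex of `Y` has an arc into `K`. -/
structure IsKernel (G : SimpleGraph V) (O : V → V → Prop) (Y K : Finset V) : Prop where
  subset : K ⊆ Y
  indep : IsIndepSet G (K : Set V)
  exists_arc : ∀ v ∈ Y, v ∉ K → ∃ u ∈ K, O v u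

/-- Either `A ∩ Y` is a kernel, or some `v ∉ A` has no arc into `A`; then `v` together with a kernel
of the vertices that have no arc to `v` is a kernel. -/
lemma exists_isKernel {A : Set V} (hA : IsIndepSet G A) (hO : ∀ u v, G.Adj u v → O u v ∨ O v u)
    (hOA : ∀ u v, G.Adj u v → u ∉ A → v ∉ A → O u v) (Y : Finset V) : ∃ K, IsKernel G O Y K := by
  classical
  induction Y using Finset.strongInduction with
  | H Y ih =>
    by_cases hall : ∀ v ∈ Y, v ∉ A → ∃ u ∈ Y, u ∈ A ∧ O v u
    · refine ⟨{v ∈ Y | v ∈ A}, filter_subset _ _, fun u hu v hv ↦ ?_, fun v hv hvA ↦ ?_⟩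
      · exact hA (mem_filter.1 hu).2 (mem_filter.1 hv).2
      · obtain ⟨u, hu, huA, hvu⟩ := hall v hv fun h ↦ hvA (mem_filter.2 ⟨hv, h⟩)
        exact ⟨u, mem_filter.2 ⟨hu, huA⟩, hvu⟩
    · push Not at hall
      obtain ⟨v, hv, hvA, hno⟩ := hall
      obtain ⟨K, hK⟩ := ih {u ∈ Y | u ≠ v ∧ ¬ O u v} (filter_ssubset.2 ⟨v, hv, by simp⟩)
      have hKY : ∀ u ∈ K, u ∈ Y ∧ ¬ O u v := fun u hu ↦
        ⟨(mem_filter.1 (hK.subset hu)).1, (mem_filter.1 (hK.subset hu)).2.2⟩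
      have hvK : ∀ u ∈ K, ¬ G.Adj v u := by
        intro u hu hvu
        obtain ⟨huY, huv⟩ := hKY u hu
        by_cases huA : u ∈ A
        · exact (hO v u hvu).elim (hno u huY huA) huv
        · exact huv (hOA u v hvu.symm huA hvA)
      refine ⟨insert v K, insert_subset hv fun u hu ↦ (hKY u hu).1, ?_, fun u hu huK ↦ ?_⟩
      · rw [coe_insert]
        exact hK.indep.insert hvK
      · rw [mem_insert, not_or] at huK
        by_cases huv : O u v
        · exact ⟨v, mem_insert_self v K, huv⟩
        · obtain ⟨w, hw, huw⟩ := hK.exists_arc u (mem_filter.2 ⟨hu, huK.1, huv⟩) huK.2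
          exact ⟨w, mem_insert_of_mem hw, huw⟩

open scoped Classical in
/-- The lemma of Bondy, Boppana and Siegel: pick a color and give it to a kernel of the vertices
having it in their lists; every other such vertex loses a color, but also an arc. -/
lemma listColorableOn_of_forall_exists_isKernel [Nonempty α] {X : Finset V} {L : V → Finset α}
    (hK : ∀ Y ⊆ X, ∃ K, IsKernel G O Y K) (hL : ∀ v ∈ X, #{u ∈ X | O v u} < #(L v)) :
    ListColorableOn G L X := by
  induction X using Finset.strongInduction generalizing L with
  | H X ih =>
    rcases X.eq_empty_or_nonempty with rfl | ⟨w, hw⟩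
    · exact listColorableOn_empty
    obtain ⟨a, ha⟩ : (L w).Nonempty := card_pos.1 (hL w hw).pos
    obtain ⟨K, hK'⟩ := hK {v ∈ X | a ∈ L v} (filter_subset _ _)
    have hKX : K ⊆ X := hK'.subset.trans (filter_subset _ _)
    have hKne : K.Nonempty := by
      by_cases hwK : w ∈ K
      · exact ⟨w, hwK⟩
      · obtain ⟨u, hu, -⟩ := hK'.exists_arc w (mem_filter.2 ⟨hw, ha⟩) hwK
        exact ⟨u, hu⟩
    have harcs : ∀ v ∈ X \ K, #{u ∈ X \ K | O v u} < #((L v).erase a) := by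
      intro v hv
      obtain ⟨hvX, hvK⟩ := mem_sdiff.1 hv
      have hsub : {u ∈ X \ K | O v u} ⊆ {u ∈ X | O v u} := filter_subset_filter _ sdiff_subset
      by_cases hav : a ∈ L v
      · obtain ⟨u, hu, hvu⟩ := hK'.exists_arc v (mem_filter.2 ⟨hvX, hav⟩) hvK
        have hlt : #{u ∈ X \ K | O v u} < #{u ∈ X | O v u} :=
          card_lt_card ((ssubset_iff_of_subset hsub).2 ⟨u, by simp [hKX hu, hvu], by simp [hu]⟩)
        have := card_erase_add_one hav
        have := hL v hvX
        omega
      · rw [erase_eq_of_notMem hav]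
        exact (card_le_card hsub).trans_lt (hL v hvX)
    obtain ⟨c, hc⟩ := ih (X \ K) (sdiff_ssubset hKX hKne)
      (fun Y hYX ↦ hK Y (hYX.trans sdiff_subset)) harcs
    refine ⟨_, (hK'.indep.isListColoringOn_const fun v hv ↦
      (mem_filter.1 (hK'.subset hv)).2).piecewise ⟨fun v hv ↦ ?_, hc.ne⟩ fun _ _ v hv _ h ↦ ?_⟩
    · exact mem_of_mem_erase (hc.mem hv)
    · exact ne_of_mem_erase (hc.mem hv) h.symm

end Kernels

section Orientations

/-- Hall's theorem with demands, by replacing `i` with `r i` copies. -/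
lemma exists_pairwise_disjoint_card_eq {ι α : Type*} [DecidableEq α] {t : ι → Finset α} {r : ι → ℕ}
    (h : ∀ Z : Finset ι, ∑ i ∈ Z, r i ≤ #(Z.biUnion t)) :
    ∃ s : ι → Finset α, Pairwise (Function.onFun Disjoint s) ∧ ∀ i, s i ⊆ t i ∧ #(s i) = r i := by
  classical
  have hall : ∀ S : Finset (Σ i, Fin (r i)), #S ≤ #(S.biUnion fun p ↦ t p.1) := by
    intro S
    calc #S ≤ #((S.image Sigma.fst).sigma fun i ↦ (univ : Finset (Fin (r i)))) :=
          card_le_card fun p hp ↦ mem_sigma.2 ⟨mem_image_of_mem _ hp, mem_univ _⟩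
      _ = ∑ i ∈ S.image Sigma.fst, r i := by simp only [card_sigma, card_univ, Fintype.card_fin]
      _ ≤ #((S.image Sigma.fst).biUnion t) := h _
      _ = #(S.biUnion fun p ↦ t p.1) := by rw [image_biUnion]
  obtain ⟨f, hf, hft⟩ := (all_card_le_biUnion_card_iff_exists_injective _).1 hall
  refine ⟨fun i ↦ univ.image fun j ↦ f ⟨i, j⟩, fun i i' hii' ↦ ?_, fun i ↦ ⟨?_, ?_⟩⟩
  · simp only [Function.onFun, Finset.disjoint_left, mem_image, mem_univ, true_and]
    rintro _ ⟨j, rfl⟩ ⟨j', hj⟩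
    exact hii' (congrArg Sigma.fst (hf hj)).symm
  · exact image_subset_iff.2 fun j _ ↦ hft ⟨i, j⟩
  · exact (card_image_of_injective _ (hf.comp sigma_mk_injective)).trans (by simp)

variable {V : Type*} {G H : SimpleGraph V} {X Z : Finset V}

open scoped Classical in
/-- The edges of `H[X]`. -/
noncomputable def edgesIn (H : SimpleGraph V) (X : Finset V) : Finset (Sym2 V) :=
  {e ∈ X.sym2 | e ∈ H.edgeSet}

lemma mem_edgesIn {e : Sym2 V} : e ∈ edgesIn H X ↔ (∀ v ∈ e, v ∈ X) ∧ e ∈ H.edgeSet := by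
  classical rw [edgesIn, mem_filter, mem_sym2_iff]

lemma edgesIn_empty : edgesIn H ∅ = ∅ := by
  simp [edgesIn]

lemma edgesIn_subset_union_biUnion [DecidableEq V] :
    edgesIn H X ⊆ edgesIn H (X \ Z) ∪ (X ∩ Z).biUnion fun v ↦ {e ∈ edgesIn H X | v ∈ e} := by
  intro e he
  by_cases hZ : ∃ v ∈ e, v ∈ Z
  · obtain ⟨v, hv, hvZ⟩ := hZ
    exact mem_union_right _ (mem_biUnion.2
      ⟨v, mem_inter.2 ⟨(mem_edgesIn.1 he).1 v hv, hvZ⟩, mem_filter.2 ⟨he, hv⟩⟩)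
  · push Not at hZ
    exact mem_union_left _ (mem_edgesIn.2
      ⟨fun v hv ↦ mem_sdiff.2 ⟨(mem_edgesIn.1 he).1 v hv, hZ v hv⟩, (mem_edgesIn.1 he).2⟩)

lemma exists_pairwise_disjoint_edges {r : V → ℕ} (hX : ∑ v ∈ X, r v ≤ #(edgesIn H X))
    (hY : ∀ Y ⊂ X, #(edgesIn H Y) ≤ ∑ v ∈ Y, r v) :
    ∃ s : V → Finset (Sym2 V), Pairwise (Function.onFun Disjoint s) ∧
      (∀ v, ∀ e ∈ s v, v ∈ e ∧ e ∈ edgesIn H X) ∧ ∀ v ∈ X, #(s v) = r v := by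
  classical
  let t (v : V) : Finset (Sym2 V) := {e ∈ edgesIn H X | v ∈ e}
  have hall (Z : Finset V) : ∑ v ∈ Z, (if v ∈ X then r v else 0) ≤ #(Z.biUnion t) := by
    rw [sum_ite_mem, inter_comm]
    rcases (X ∩ Z).eq_empty_or_nonempty with hXZ | hXZ
    · simp [hXZ]
    have hssub : X \ Z ⊂ X := by
      rw [← sdiff_inter_self_left]
      exact sdiff_ssubset inter_subset_left hXZ
    have hcard : #(edgesIn H X) ≤ #(edgesIn H (X \ Z)) + #((X ∩ Z).biUnion t) :=
      (card_le_card edgesIn_subset_union_biUnion).trans (card_union_le _ _)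
    have hsum : ∑ v ∈ X ∩ Z, r v + ∑ v ∈ X \ Z, r v = ∑ v ∈ X, r v :=
      sum_inter_add_sum_sdiff X Z r
    have hmono : #((X ∩ Z).biUnion t) ≤ #(Z.biUnion t) :=
      card_le_card (biUnion_subset_biUnion_of_subset_left _ inter_subset_right)
    have := hY _ hssub
    omega
  obtain ⟨s, hs, hsr⟩ := exists_pairwise_disjoint_card_eq hall
  refine ⟨s, hs, fun v e he ↦ (mem_filter.1 ((hsr v).1 he)).symm, fun v hv ↦ ?_⟩
  rw [(hsr v).2, if_pos hv]

open scoped Classical in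
/-- Bidirect the edges of `G` outside `H[X]`, and delete from each `v` the arcs along `r v` edges of
`H[X]` reserved for `v`. -/
lemma exists_orientation {r : V → ℕ} (hHG : H ≤ G) (hX : ∑ v ∈ X, r v ≤ #(edgesIn H X))
    (hY : ∀ Y ⊂ X, #(edgesIn H Y) ≤ ∑ v ∈ Y, r v) :
    ∃ O : V → V → Prop, (∀ u v, G.Adj u v → O u v ∨ O v u) ∧
      (∀ u v, G.Adj u v → ¬ H.Adj u v → O u v) ∧
      ∀ v ∈ X, #{u ∈ X | O v u} + r v ≤ degIn G X v := by
  obtain ⟨s, hdisj, hs, hsr⟩ := exists_pairwise_disjoint_edges hX hY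
  refine ⟨fun v u ↦ G.Adj v u ∧ s(v, u) ∉ s v, fun u v huv ↦ ?_, fun u v huv hH ↦ ?_,
    fun v hv ↦ ?_⟩
  · by_contra! h
    have hu : s(u, v) ∈ s u := h.1 huv
    have hv : s(u, v) ∈ s v := Sym2.eq_swap ▸ h.2 huv.symm
    exact Finset.disjoint_left.1 (hdisj huv.ne) hu hv
  · exact ⟨huv, fun h ↦ hH (mem_edgesIn.1 (hs u _ h).2).2⟩
  · have hreserved : r v ≤ #{u ∈ X | G.Adj v u ∧ s(v, u) ∈ s v} := by
      rw [← hsr v hv]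
      refine (card_le_card fun e he ↦ ?_).trans (card_image_le (f := fun u ↦ s(v, u)))
      obtain ⟨hve, heX⟩ := hs v e he
      obtain ⟨u, rfl⟩ := Sym2.mem_iff_exists.1 hve
      obtain ⟨hmem, hadj⟩ := mem_edgesIn.1 heX
      exact mem_image.2 ⟨u, mem_filter.2 ⟨hmem u (Sym2.mem_mk_right v u), hHG hadj, he⟩, rfl⟩
    have hsplit := card_filter_add_card_filter_not (s := {u ∈ X | G.Adj v u})
      fun u ↦ s(v, u) ∈ s v
    rw [filter_filter, filter_filter] at hsplit
    refine (Nat.add_le_add_left hreserved _).trans_eq ?_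
    rw [degIn, ← hsplit, add_comm]
    congr!

end Orientations

section VertexCritical

variable {V α : Type*} [Fintype V] {G : SimpleGraph V} {L : V → Finset α} {X : Finset V}

/-- `G` cannot be colored from the lists `L`, but every proper induced subgraph can. -/
structure IsVertexCritical (G : SimpleGraph V) (L : V → Finset α) : Prop where
  not_colorable : ¬ ListColorableOn G L univ
  colorable : ∀ X ≠ univ, ListColorableOn G L X

lemma ListCritical.exists_isVertexCritical {k : ℕ} (h : ListCritical k G) :
    ∃ L : V → Finset ℕ, (∀ v, #(L v) = k - 1) ∧ IsVertexCritical G L := by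
  classical
  obtain ⟨hG, hsub⟩ := h
  simp only [Choosable, not_forall, exists_prop] at hG
  obtain ⟨L, hL, hbad⟩ := hG
  refine ⟨L, hL, fun ⟨c, hc⟩ ↦ hbad ⟨c, fun v ↦ hc.mem (mem_univ v),
    fun u v huv ↦ hc.ne (mem_univ u) (mem_univ v) huv⟩, fun X hX ↦ ?_⟩
  have hne : (⊤ : G.Subgraph).induce (X : Set V) ≠ ⊤ := fun h ↦
    hX (coe_eq_univ.1 (congrArg Subgraph.verts h))
  obtain ⟨c, hcL, hc⟩ := hsub _ hne (fun v ↦ L v) fun v ↦ hL v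
  refine ⟨fun v ↦ if h : v ∈ X then c ⟨v, h⟩ else 0, fun v hv ↦ ?_, fun u hu v hv huv ↦ ?_⟩
  · simpa only [dif_pos hv] using hcL ⟨v, hv⟩
  · simpa only [dif_pos hu, dif_pos hv] using hc (u := ⟨u, hu⟩) (v := ⟨v, hv⟩) ⟨hu, hv, huv⟩

namespace IsVertexCritical

lemma exists_residual_lists (hG : IsVertexCritical G L) (hX : X.Nonempty) :
    ∃ L' : V → Finset α, (∀ v, #(L v) + degIn G X v ≤ #(L' v) + deg G v) ∧
      ¬ ListColorableOn G L' X := by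
  classical
  obtain ⟨x, hx⟩ := hX
  have hne : univ \ X ≠ univ := fun h ↦ (mem_sdiff.1 (h ▸ mem_univ x)).2 hx
  obtain ⟨L', hL', hext⟩ := (hG.colorable _ hne).exists_residual_lists
  refine ⟨L', fun v ↦ ?_, fun h ↦ hG.not_colorable (hext h)⟩
  rw [← degIn_univ, ← degIn_add_degIn_sdiff G (subset_univ X)]
  have := hL' v
  omega

lemma card_le_deg [Nonempty α] (hG : IsVertexCritical G L) (v : V) : #(L v) ≤ deg G v := by
  by_contra! hv
  obtain ⟨L', hL', hbad⟩ := hG.exists_residual_lists (singleton_nonempty v)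
  refine hbad (listColorableOn_of_forall_exists_degIn_lt fun P hP ⟨a, ha⟩ ↦ ⟨a, ha, ?_⟩)
  obtain rfl := mem_singleton.1 (hP ha)
  have := hL' a
  have := degIn_mono G hP a
  omega

lemma exists_adj_notMem (hG : IsVertexCritical G L) (hX : X.Nonempty) (hXu : X ≠ univ) :
    ∃ a ∈ X, ∃ b ∉ X, G.Adj a b := by
  classical
  by_contra! hno
  obtain ⟨x, hx⟩ := hX
  obtain ⟨c, hc⟩ := hG.colorable X hXu
  obtain ⟨c', hc'⟩ := hG.colorable (univ \ X) fun h ↦ (mem_sdiff.1 (h ▸ mem_univ x)).2 hx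
  exact hG.not_colorable ⟨_, hc.piecewise hc' fun u hu v hv huv ↦
    absurd huv (hno u hu v (mem_sdiff.1 hv).2)⟩

lemma eq_univ_of_degIn_eq_deg (hG : IsVertexCritical G L) (hX : X.Nonempty)
    (hdeg : ∀ v ∈ X, degIn G X v = deg G v) : X = univ := by
  classical
  by_contra hXu
  obtain ⟨a, ha, b, hb, hab⟩ := hG.exists_adj_notMem hX hXu
  have hsplit := degIn_add_degIn_sdiff G (subset_univ X) a
  have hpos : 0 < degIn G (univ \ X) a := degIn_pos G (by simp [hb]) hab
  rw [degIn_univ, hdeg a ha] at hsplit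
  omega

lemma degIn_eq_of_isNonseparable [DecidableEq V] [Nonempty α] (hG : IsVertexCritical G L)
    (hX : IsNonseparable G X) (hdeg : ∀ v ∈ X, deg G v ≤ #(L v)) {u v : V} (hu : u ∈ X)
    (hv : v ∈ X) : degIn G X u = degIn G X v := by
  obtain ⟨L', hL', hbad⟩ := hG.exists_residual_lists ⟨u, hu⟩
  refine hX.degIn_eq (fun w hw ↦ ?_) hbad hu hv
  have := hL' w
  have := hdeg w hw
  omega

end IsVertexCritical

end VertexCritical

section KernelMagic

variable {V : Type*} {G : SimpleGraph V}

lemma bddAbove_crossCount [Finite V] :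
    BddAbove {n | ∃ A : Set V, IsIndepSet G A ∧ crossCount G A = n} := by
  refine ⟨Nat.card (V × V), ?_⟩
  rintro _ ⟨A, -, rfl⟩
  exact Finite.card_subtype_le _

lemma exists_crossCount_eq_mic [Finite V] (G : SimpleGraph V) :
    ∃ A : Set V, IsIndepSet G A ∧ crossCount G A = mic G :=
  Nat.sSup_mem (s := {n | ∃ A : Set V, IsIndepSet G A ∧ crossCount G A = n})
    ⟨_, ∅, isIndepSet_empty, rfl⟩ bddAbove_crossCount

lemma sum_deg_le_mic [Finite V] {A : Finset V} (hA : IsIndepSet G (A : Set V)) :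
    ∑ v ∈ A, deg G v ≤ mic G := by
  have hcross : ∑ v ∈ A, deg G v ≤ crossCount G A := by
    let toPair (p : Σ v : A, G.neighborSet v) :
        {p : V × V // p.1 ∈ (A : Set V) ∧ p.2 ∉ (A : Set V) ∧ G.Adj p.1 p.2} :=
      ⟨(p.1, p.2), p.1.2, fun h ↦ hA p.1.2 h p.2.2, p.2.2⟩
    have hinj : Function.Injective toPair := by
      rintro ⟨⟨u, hu⟩, v, hv⟩ ⟨⟨u', hu'⟩, v', hv'⟩ h
      simp only [toPair, Subtype.mk.injEq, Prod.mk.injEq] at h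
      obtain ⟨rfl, rfl⟩ := h
      rfl
    calc ∑ v ∈ A, deg G v = Nat.card (Σ v : A, G.neighborSet v) := by
          rw [Nat.card_sigma, ← sum_coe_sort]
          rfl
      _ ≤ crossCount G A := Nat.card_le_card_of_injective toPair hinj
  exact hcross.trans (le_csSup bddAbove_crossCount ⟨A, hA, rfl⟩)

variable [Fintype V]

lemma crossCount_le_card_edgesIn (A : Set V) :
    crossCount G A ≤ #(edgesIn (G.between A Aᶜ) univ) := by
  rw [crossCount, ← Nat.card_eq_finsetCard]
  refine Nat.card_le_card_of_injective (fun p ↦ ⟨s(p.1.1, p.1.2), mem_edgesIn.2 ⟨by simp, ?_⟩⟩) ?_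
  · exact ⟨p.2.2.2, Or.inl ⟨p.2.1, p.2.2.1⟩⟩
  · rintro ⟨⟨u, v⟩, hu, hv, huv⟩ ⟨⟨u', v'⟩, hu', hv', huv'⟩ h
    simp only [Subtype.mk.injEq, Sym2.eq_iff] at h
    rcases h with ⟨rfl, rfl⟩ | ⟨rfl, rfl⟩
    · rfl
    · exact absurd hu hv'

variable {α : Type*} [Nonempty α] {L : V → Finset α}

namespace IsVertexCritical

/-- In a minimal counterexample `X` the edges between `A` and its complement can be oriented so
sparsely that the kernel lemma colors `G[X]` from the residual lists. -/
lemma card_edgesIn_between_lt (hG : IsVertexCritical G L) {A : Set V} (hA : IsIndepSet G A)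
    {X : Finset V} (hX : X.Nonempty) :
    #(edgesIn (G.between A Aᶜ) X) < ∑ v ∈ X, (deg G v + 1 - #(L v)) := by
  induction X using Finset.strongInduction with
  | H X ih =>
    by_contra! hle
    have hlt : ∀ Y ⊂ X, #(edgesIn (G.between A Aᶜ) Y) ≤ ∑ v ∈ Y, (deg G v + 1 - #(L v)) := by
      intro Y hY
      rcases Y.eq_empty_or_nonempty with rfl | hYne
      · simp [edgesIn_empty]
      · exact (ih Y hY hYne).le
    obtain ⟨O, hO, hOH, hOX⟩ := exists_orientation between_le hle hlt
    have hOA : ∀ u v, G.Adj u v → u ∉ A → v ∉ A → O u v := fun u v huv hu hv ↦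
      hOH u v huv fun h ↦ by simp [between_adj, hu, hv] at h
    obtain ⟨L', hL', hbad⟩ := hG.exists_residual_lists hX
    refine hbad (listColorableOn_of_forall_exists_isKernel
      (fun Y _ ↦ exists_isKernel hA hO hOA Y) fun v hv ↦ ?_)
    have := hOX v hv
    have := hL' v
    have := hG.card_le_deg v
    omega

lemma univ_nonempty (hG : IsVertexCritical G L) : (univ : Finset V).Nonempty := by
  rw [nonempty_iff_ne_empty]
  exact fun h ↦ hG.not_colorable (h ▸ listColorableOn_empty)

/-- The kernel magic inequality of Kierstead and Rabern. -/
theorem mic_add_sum_card_lt (hG : IsVertexCritical G L) :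
    mic G + ∑ v, #(L v) + 1 ≤ 2 * edgeCount G + Fintype.card V := by
  obtain ⟨A, hA, hmic⟩ := exists_crossCount_eq_mic G
  have hlt := hG.card_edgesIn_between_lt hA hG.univ_nonempty
  have hle := crossCount_le_card_edgesIn (G := G) A
  have hsum : ∑ v, (deg G v + 1 - #(L v)) + ∑ v, #(L v) = 2 * edgeCount G + Fintype.card V := by
    rw [← sum_add_distrib, ← sum_deg, Fintype.card_eq_sum_ones, ← sum_add_distrib]
    exact sum_congr rfl fun v _ ↦ by
      have := hG.card_le_deg v
      omega
  omega

end IsVertexCritical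

end KernelMagic

section Brooks

variable {V α : Type*} [Fintype V] [DecidableEq V] [Nonempty α] {G : SimpleGraph V}
  {L : V → Finset α} {d : ℕ} {v x : V} {D : Finset V}

namespace IsVertexCritical

/-- A minimal lobe `C` inside `D` spans a regular graph together with its root, so each of its
vertices has one further neighbor, which can only be `v`. -/
lemma le_degIn_add_one_of_isLobe (hG : IsVertexCritical G L) (hdeg : ∀ w, deg G w = d)
    (hL : ∀ w, d ≤ #(L w)) (hv : (G.induce (univ.erase v : Set V)).Preconnected)
    (hD : IsLobe G (univ.erase v) x D) : d ≤ degIn G D v + 1 := by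
  obtain ⟨y, C, hCD, hC, hB⟩ := hD.exists_isNonseparable hv
  have hvB : v ∉ insert y C := fun h ↦
    notMem_erase v univ (insert_subset hC.root_mem hC.subset h)
  have hdegC : ∀ c ∈ C, degIn G {v} c + degIn G (insert y C) c = d := fun c hc ↦ by
    rw [hC.degIn_insert hc, degIn_add_degIn_erase G (mem_univ v), degIn_univ, hdeg]
  have hadj : ∀ c ∈ C, G.Adj c v := by
    intro c hc
    by_contra hcv
    have hcd := hdegC c hc
    rw [degIn_singleton_of_not_adj G hcv, zero_add] at hcd
    have huniv : insert y C = univ := hG.eq_univ_of_degIn_eq_deg ⟨c, mem_insert_of_mem hc⟩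
      fun w hw ↦ by
        rw [hdeg, ← hcd]
        exact hG.degIn_eq_of_isNonseparable hB (fun z _ ↦ hdeg z ▸ hL z) hw (mem_insert_of_mem hc)
    exact hvB (huniv ▸ mem_univ v)
  obtain ⟨c, hc⟩ := hC.nonempty
  calc d = 1 + degIn G (insert y C) c := by
        rw [← degIn_singleton_of_adj G (hadj c hc), hdegC c hc]
    _ ≤ #C + 1 := by
        have := degIn_lt_card G (mem_insert_of_mem hc : c ∈ insert y C)
        rw [card_insert_of_notMem hC.root_notMem] at this
        omega
    _ ≤ degIn G D v + 1 := by
        classical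
        gcongr
        exact card_le_card fun w hw ↦ mem_filter.2 ⟨hCD hw, (hadj w hw).symm⟩

lemma isNonseparable_erase (hG : IsVertexCritical G L) (hd : 3 ≤ d) (hdeg : ∀ w, deg G w = d)
    (hL : ∀ w, d ≤ #(L w)) (hv : (G.induce (univ.erase v : Set V)).Preconnected) :
    IsNonseparable G (univ.erase v) := by
  refine ⟨by simpa using hv, fun x hx ↦ ?_⟩
  by_contra hsep
  obtain ⟨C, D, hCD, hC, hD⟩ := exists_disjoint_isLobe hx hsep
  have hCv := hG.le_degIn_add_one_of_isLobe hdeg hL hv hC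
  have hDv := hG.le_degIn_add_one_of_isLobe hdeg hL hv hD
  have hle := degIn_le_deg G (C ∪ D) v
  rw [degIn_union G hCD, hdeg] at hle
  omega

lemma isUniversal (hG : IsVertexCritical G L) (hd : 3 ≤ d) (hdeg : ∀ w, deg G w = d)
    (hL : ∀ w, d ≤ #(L w)) (hv : (G.induce (univ.erase v : Set V)).Preconnected) :
    G.IsUniversal v := by
  have hB := hG.isNonseparable_erase hd hdeg hL hv
  have hsplit (w : V) : degIn G {v} w + degIn G (univ.erase v) w = d := by
    rw [degIn_add_degIn_erase G (mem_univ v), degIn_univ, hdeg]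
  obtain ⟨u, hvu⟩ : ∃ u, G.Adj v u := by
    by_contra! hno
    have : degIn G univ v = 0 := (degIn_eq_zero G).2 fun u _ ↦ hno u
    rw [degIn_univ, hdeg] at this
    omega
  intro w hvw
  by_contra hno
  have hu := hsplit u
  have hw := hsplit w
  have heq := hG.degIn_eq_of_isNonseparable hB (fun z _ ↦ hdeg z ▸ hL z)
    (mem_erase.2 ⟨hvu.ne', mem_univ u⟩) (mem_erase.2 ⟨hvw.symm, mem_univ w⟩)
  rw [degIn_singleton_of_adj G hvu.symm] at hu
  rw [degIn_singleton_of_not_adj G fun h ↦ hno h.symm] at hw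
  omega

/-- Brooks' theorem for list-critical graphs. -/
theorem eq_top_of_isNonseparable (hG : IsVertexCritical G L) (hd : 3 ≤ d)
    (hdeg : ∀ w, deg G w = d) (hL : ∀ w, d ≤ #(L w)) (hsep : IsNonseparable G univ) : G = ⊤ := by
  refine eq_top_iff.2 fun v w hvw ↦ ?_
  exact hG.isUniversal hd hdeg hL (hsep.preconnected_erase v (mem_univ v)) hvw

lemma exists_lt_degIn_eq (hG : IsVertexCritical G L) (hd : 3 ≤ d) (hL : ∀ w, d ≤ #(L w))
    (hne : IsEmpty (G ≃g (⊤ : SimpleGraph (Fin (d + 1))))) {B : Finset V} (hB : B.Nonempty)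
    (hsep : IsNonseparable G B) (hdeg : ∀ v ∈ B, deg G v = d) :
    ∃ r < d, ∀ v ∈ B, degIn G B v = r := by
  obtain ⟨b, hb⟩ := hB
  have hreg : ∀ v ∈ B, degIn G B v = degIn G B b := fun v hv ↦
    hG.degIn_eq_of_isNonseparable hsep (fun w hw ↦ hdeg w hw ▸ hL w) hv hb
  refine ⟨degIn G B b, lt_of_le_of_ne (hdeg b hb ▸ degIn_le_deg G B b) fun hbd ↦ ?_, hreg⟩
  obtain rfl : B = univ := hG.eq_univ_of_degIn_eq_deg ⟨b, hb⟩ fun v hv ↦ by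
    rw [hreg v hv, hbd, hdeg v hv]
  obtain rfl := hG.eq_top_of_isNonseparable hd (fun v ↦ hdeg v (mem_univ v)) hL hsep
  have hcard : Fintype.card V = d + 1 := by
    have hb' := hdeg b hb
    rw [deg, Nat.card_eq_fintype_card, card_neighborSet_eq_degree, complete_graph_degree] at hb'
    omega
  exact hne.elim (Iso.completeGraph (Fintype.equivFinOfCardEq hcard))

end IsVertexCritical

end Brooks

section SurplusSets

variable {V : Type*} {G : SimpleGraph V} {d r : ℕ} {x : V} {X Z B C J J' : Finset V}

/-- `J` is an independent set of vertices of degree `d` in `G[X]`, so large that the average degree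
of `G[X]` exceeds `d - 1` by at most `2 * #J / #X`. -/
structure IsSurplusSet (G : SimpleGraph V) (d : ℕ) (X J : Finset V) : Prop where
  subset : J ⊆ X
  indep : IsIndepSet G (J : Set V)
  degIn_eq : ∀ v ∈ J, degIn G X v = d
  degSum_le : degSum G X + #X ≤ 2 * #J + d * #X

lemma isSurplusSet_empty (hX : degSum G X + #X ≤ d * #X) : IsSurplusSet G d X ∅ where
  subset := empty_subset X
  indep := by simpa using isIndepSet_empty
  degIn_eq := by simp
  degSum_le := by simpa using hX

lemma degSum_eq_of_forall_degIn_eq (hr : ∀ v ∈ X, degIn G X v = r) : degSum G X = r * #X := by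
  rw [degSum, sum_congr rfl hr, sum_const, smul_eq_mul, mul_comm]

lemma degSum_add_card_le_of_forall_degIn_eq (hrd : r < d) (hr : ∀ v ∈ X, degIn G X v = r) :
    degSum G X + #X ≤ d * #X := by
  rw [degSum_eq_of_forall_degIn_eq hr, ← add_one_mul]
  gcongr
  omega

lemma IsSurplusSet.degIn_eq_of_subset (hJ : IsSurplusSet G d Z J) (hZX : Z ⊆ X)
    (hX : ∀ v ∈ X, degIn G X v ≤ d) {v : V} (hv : v ∈ J) : degIn G X v = d :=
  (hX v (hZX (hJ.subset hv))).antisymm (hJ.degIn_eq v hv ▸ degIn_mono G hZX v)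

variable [DecidableEq V]

namespace IsSurplusSet

lemma not_adj_of_mem_sdiff (hJ : IsSurplusSet G d Z J) (hZX : Z ⊆ X) {u v : V}
    (hv : v ∈ J) (hX : degIn G X v ≤ d) (hu : u ∈ X \ Z) : ¬ G.Adj v u := by
  intro hvu
  have hsplit := degIn_add_degIn_sdiff G hZX v
  have hpos := degIn_pos G hu hvu
  have hd := hJ.degIn_eq v hv
  omega

lemma union (hJ : IsSurplusSet G d Z J) (hJ' : IsSurplusSet G d (X \ Z) J') (hZX : Z ⊆ X)
    (hX : ∀ v ∈ X, degIn G X v ≤ d) (hZ : ∀ u ∈ Z, ∀ v ∈ X \ Z, ¬ G.Adj u v) :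
    IsSurplusSet G d X (J ∪ J') where
  subset := union_subset (hJ.subset.trans hZX) (hJ'.subset.trans sdiff_subset)
  indep := by
    rw [coe_union]
    exact hJ.indep.union hJ'.indep fun u hu v hv ↦ hZ u (hJ.subset hu) v (hJ'.subset hv)
  degIn_eq v hv := (mem_union.1 hv).elim (hJ.degIn_eq_of_subset hZX hX)
    (hJ'.degIn_eq_of_subset sdiff_subset hX)
  degSum_le := by
    have hcross : ∑ v ∈ Z, degIn G (X \ Z) v = 0 :=
      sum_eq_zero fun v hv ↦ (degIn_eq_zero G).2 (hZ v hv)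
    have hsplit := degSum_add_degSum_sdiff G hZX
    have hle := hJ.degSum_le
    have hle' := hJ'.degSum_le
    rw [card_union_of_disjoint (disjoint_sdiff.mono hJ.subset hJ'.subset),
      ← card_sdiff_add_card_eq_card hZX, mul_add d]
    omega

lemma of_sdiff (hJ : IsSurplusSet G d (X \ B) J) (hBX : B ⊆ X) (hX : ∀ v ∈ X, degIn G X v ≤ d)
    (hB : degSum G B + 2 * ∑ v ∈ B, degIn G (X \ B) v + #B ≤ d * #B) : IsSurplusSet G d X J where
  subset := hJ.subset.trans sdiff_subset
  indep := hJ.indep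
  degIn_eq v hv := hJ.degIn_eq_of_subset sdiff_subset hX hv
  degSum_le := by
    have hsplit := degSum_add_degSum_sdiff G hBX
    have hle := hJ.degSum_le
    rw [← card_sdiff_add_card_eq_card hBX, mul_add d]
    omega

lemma insert_of_sdiff (hJ : IsSurplusSet G d (X \ B) J) (hBX : B ⊆ X)
    (hX : ∀ v ∈ X, degIn G X v ≤ d) (hx : x ∈ B) (hxd : degIn G X x = d)
    (hB : degSum G B + 2 * ∑ v ∈ B, degIn G (X \ B) v + #B ≤ d * #B + 2) :
    IsSurplusSet G d X (insert x J) where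
  subset := insert_subset (hBX hx) (hJ.subset.trans sdiff_subset)
  indep := by
    rw [coe_insert]
    exact hJ.indep.insert fun v hv hxv ↦ hJ.not_adj_of_mem_sdiff sdiff_subset hv
      (hX v (sdiff_subset (hJ.subset hv))) (by simp [hBX hx, hx]) hxv.symm
  degIn_eq v hv := by
    rcases mem_insert.1 hv with rfl | hv
    · exact hxd
    · exact hJ.degIn_eq_of_subset sdiff_subset hX hv
  degSum_le := by
    have hsplit := degSum_add_degSum_sdiff G hBX
    have hle := hJ.degSum_le
    rw [card_insert_of_notMem fun h ↦ (mem_sdiff.1 (hJ.subset h)).2 hx,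
      ← card_sdiff_add_card_eq_card hBX, mul_add d]
    omega

end IsSurplusSet

namespace IsLobe

lemma degIn_sdiff_eq_zero (hC : IsLobe G X x C) {c : V} (hc : c ∈ C) :
    degIn G (X \ insert x C) c = 0 := by
  have := degIn_add_degIn_sdiff G (insert_subset hC.root_mem hC.subset) c
  rw [hC.degIn_insert hc] at this
  omega

/-- Here `d * #C` pays for deleting `C`, because `r ≤ #C`. -/
lemma exists_isSurplusSet_of_add_one_lt (hC : IsLobe G X x C) (hr : r + 1 < d)
    (hreg : ∀ v ∈ insert x C, degIn G (insert x C) v = r) (hX : ∀ v ∈ X, degIn G X v ≤ d)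
    (hJ : ∃ J, IsSurplusSet G d (X \ C) J) : ∃ J, IsSurplusSet G d X J := by
  obtain ⟨J, hJ⟩ := hJ
  refine ⟨J, hJ.of_sdiff hC.subset hX ?_⟩
  have hcross : ∑ v ∈ C, degIn G (X \ C) v = ∑ v ∈ C, degIn G (insert x C \ C) v := by
    refine sum_congr rfl fun v hv ↦ ?_
    have hXsplit := degIn_add_degIn_sdiff G hC.subset v
    have hBsplit := degIn_add_degIn_sdiff G (subset_insert x C) v
    have hXB := hC.degIn_insert hv
    omega
  have hcard : #(insert x C) = #C + 1 := card_insert_of_notMem hC.root_notMem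
  have hrC : r ≤ #C := by
    have := degIn_lt_card G (mem_insert_self x C)
    rw [hreg x (mem_insert_self x C), hcard] at this
    omega
  have hsplit := degSum_add_degSum_sdiff G (subset_insert x C)
  calc degSum G C + 2 * ∑ v ∈ C, degIn G (X \ C) v + #C ≤ degSum G (insert x C) + #C := by omega
    _ = r * #C + r + #C := by rw [degSum_eq_of_forall_degIn_eq hreg, hcard]; ring
    _ ≤ r * #C + #C + #C := by gcongr
    _ = (r + 2) * #C := by ring
    _ ≤ d * #C := by gcongr; omega

/-- At most one edge leaves `insert x C`, and if one does then it is at `x`, which has degree `d`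
and joins the surplus set. -/
lemma exists_isSurplusSet_of_add_one_eq (hC : IsLobe G X x C) (hr : r + 1 = d)
    (hreg : ∀ v ∈ insert x C, degIn G (insert x C) v = r) (hX : ∀ v ∈ X, degIn G X v ≤ d)
    (hJ : ∃ J, IsSurplusSet G d (X \ insert x C) J) : ∃ J, IsSurplusSet G d X J := by
  obtain ⟨J, hJ⟩ := hJ
  have hBX : insert x C ⊆ X := insert_subset hC.root_mem hC.subset
  have hcross : ∑ v ∈ insert x C, degIn G (X \ insert x C) v = degIn G (X \ insert x C) x := by
    rw [sum_insert hC.root_notMem, sum_eq_zero fun v hv ↦ hC.degIn_sdiff_eq_zero hv, add_zero]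
  have hsum : degSum G (insert x C) + #(insert x C) = d * #(insert x C) := by
    rw [degSum_eq_of_forall_degIn_eq hreg, ← hr, add_one_mul]
  have hxsplit := degIn_add_degIn_sdiff G hBX x
  rw [hreg x (mem_insert_self x C)] at hxsplit
  have hxd := hX x hC.root_mem
  by_cases hout : degIn G (X \ insert x C) x = 0
  · exact ⟨J, hJ.of_sdiff hBX hX (by omega)⟩
  · exact ⟨insert x J, hJ.insert_of_sdiff hBX hX (mem_insert_self x C) (by omega) (by omega)⟩

end IsLobe

lemma exists_isSurplusSet (hX : ∀ v ∈ X, degIn G X v ≤ d)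
    (hreg : ∀ B ⊆ X, B.Nonempty → IsNonseparable G B → ∃ r < d, ∀ v ∈ B, degIn G B v = r) :
    ∃ J, IsSurplusSet G d X J := by
  induction X using Finset.strongInduction with
  | H X ih =>
    have hrec : ∀ Z ⊂ X, ∃ J, IsSurplusSet G d Z J := fun Z hZ ↦
      ih Z hZ (fun v hv ↦ (degIn_mono G hZ.subset v).trans (hX v (hZ.subset hv)))
        fun B hB ↦ hreg B (hB.trans hZ.subset)
    by_cases hconn : (G.induce (X : Set V)).Preconnected
    · rcases X.eq_empty_or_nonempty with rfl | ⟨x, hx⟩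
      · exact ⟨∅, isSurplusSet_empty (by simp [degSum])⟩
      rcases (X.erase x).eq_empty_or_nonempty with hone | hlobe
      · obtain rfl : X = {x} := by rw [← insert_erase hx, hone, insert_empty_eq]
        obtain ⟨r, hr, hXr⟩ := hreg {x} subset_rfl (singleton_nonempty x) isNonseparable_singleton
        exact ⟨∅, isSurplusSet_empty (degSum_add_card_le_of_forall_degIn_eq hr hXr)⟩
      obtain ⟨y, C, -, hC, hsep⟩ := (isLobe_erase hx hlobe).exists_isNonseparable hconn
      have hBX : insert y C ⊆ X := insert_subset hC.root_mem hC.subset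
      obtain ⟨r, hr, hBr⟩ := hreg _ hBX (insert_nonempty y C) hsep
      rcases (Nat.succ_le_of_lt hr).lt_or_eq with hr | hr
      · exact hC.exists_isSurplusSet_of_add_one_lt hr hBr hX
          (hrec _ (sdiff_ssubset hC.subset hC.nonempty))
      · exact hC.exists_isSurplusSet_of_add_one_eq hr hBr hX
          (hrec _ (sdiff_ssubset hBX (insert_nonempty y C)))
    · obtain ⟨P, hPX, hP, hPc, hno⟩ : ∃ P ⊆ X, P.Nonempty ∧ (X \ P).Nonempty ∧
          ∀ a ∈ P, ∀ b ∈ X \ P, ¬ G.Adj a b := by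
        contrapose! hconn
        exact induce_preconnected_of_forall_exists_adj hconn
      obtain ⟨J, hJ⟩ := hrec P (hPX.ssubset_of_ne fun h ↦ by simp [h] at hPc)
      obtain ⟨J', hJ'⟩ := hrec (X \ P) (sdiff_ssubset hPX hP)
      exact ⟨J ∪ J', hJ.union hJ' hPX hX hno⟩

end SurplusSets

section IndependentSubsets

variable {V : Type*} (G : SimpleGraph V)

lemma degSum_erase_add [DecidableEq V] {Y : Finset V} {v : V} (hv : v ∈ Y) :
    degSum G (Y.erase v) + 2 * degIn G Y v = degSum G Y := by
  have hsplit := degSum_add_degSum_sdiff G (singleton_subset_iff.2 hv)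
  have hv' := degIn_add_degIn_erase G hv v
  rw [degIn_singleton_of_not_adj G G.irrefl, zero_add] at hv'
  rw [degSum, sum_singleton, sum_singleton, degIn_singleton_of_not_adj G G.irrefl,
    sdiff_singleton_eq_erase, hv'] at hsplit
  omega

/-- Delete a vertex of degree at least two if there is one; otherwise put a vertex into the
independent set and delete it along with its neighbor, if any. -/
lemma exists_isIndepSet_card_le (Y : Finset V) :
    ∃ I ⊆ Y, IsIndepSet G (I : Set V) ∧ 2 * #Y ≤ 2 * #I + degSum G Y ∧
      3 * #Y ≤ 4 * #I + degSum G Y := by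
  classical
  induction Y using Finset.strongInduction with
  | H Y ih =>
    rcases Y.eq_empty_or_nonempty with rfl | ⟨w, hw⟩
    · exact ⟨∅, subset_rfl, by simpa using isIndepSet_empty, by simp, by simp⟩
    by_cases hbig : ∃ v ∈ Y, 2 ≤ degIn G Y v
    · obtain ⟨v, hv, hvdeg⟩ := hbig
      obtain ⟨I, hIY, hI, hI₂, hI₃⟩ := ih (Y.erase v) (erase_ssubset hv)
      have hsum := degSum_erase_add G hv
      have hcard := card_erase_add_one hv
      exact ⟨I, hIY.trans (erase_subset v Y), hI, by omega, by omega⟩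
    · push Not at hbig
      let N : Finset V := {u ∈ Y | G.Adj w u}
      have hNY : insert w N ⊆ Y := insert_subset hw (filter_subset _ _)
      obtain ⟨I, hIY, hI, hI₂, hI₃⟩ :=
        ih (Y \ insert w N) (sdiff_ssubset hNY (insert_nonempty w N))
      have hNcard : #N = degIn G Y w := by rw [degIn]
      have hwN : w ∉ N := by simp [N]
      have hwI : w ∉ I := fun h ↦ (mem_sdiff.1 (hIY h)).2 (mem_insert_self w N)
      have hcard := card_sdiff_add_card_eq_card hNY
      have hsum := degSum_erase_add G hw
      have hmono : degSum G (Y \ insert w N) ≤ degSum G (Y.erase w) := by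
        rw [← sdiff_singleton_eq_erase]
        exact degSum_mono G (sdiff_subset_sdiff subset_rfl (by simp))
      have hlt := hbig w hw
      rw [card_insert_of_notMem hwN] at hcard
      refine ⟨insert w I, insert_subset hw (hIY.trans sdiff_subset), ?_, ?_, ?_⟩
      · rw [coe_insert]
        refine hI.insert fun u hu hwu ↦ (mem_sdiff.1 (hIY hu)).2 ?_
        exact mem_insert_of_mem (mem_filter.2 ⟨(mem_sdiff.1 (hIY hu)).1, hwu⟩)
      all_goals
        rw [card_insert_of_notMem hwI]
        omega

end IndependentSubsets

section EdgeBound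

variable {V α : Type*} {G : SimpleGraph V} {L : V → Finset α} {d : ℕ} {X I J : Finset V}

lemma IsSurplusSet.mul_card_add_mul_card_le_mic [Finite V] (hJ : IsSurplusSet G d X J)
    (hX : ∀ v ∈ X, deg G v ≤ d) (hI : IsIndepSet G (I : Set V)) (hXI : Disjoint X I)
    (hId : ∀ v ∈ I, d < deg G v) : d * #J + (d + 1) * #I ≤ mic G := by
  classical
  have := Fintype.ofFinite V
  have hno : ∀ u ∈ J, ∀ v ∈ I, ¬ G.Adj u v := fun u hu v hv ↦
    hJ.not_adj_of_mem_sdiff (subset_univ X) hu (degIn_univ G u ▸ hX u (hJ.subset hu))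
      (by simpa using Finset.disjoint_right.1 hXI hv)
  have hJI : IsIndepSet G ((J ∪ I : Finset V) : Set V) := by
    rw [coe_union]
    exact hJ.indep.union hI hno
  calc d * #J + (d + 1) * #I = #J • d + #I • (d + 1) := by simp only [smul_eq_mul, mul_comm]
    _ ≤ ∑ v ∈ J, deg G v + ∑ v ∈ I, deg G v := by
      gcongr
      · exact card_nsmul_le_sum _ _ _ fun v hv ↦ hJ.degIn_eq v hv ▸ degIn_le_deg G X v
      · exact card_nsmul_le_sum _ _ _ hId
    _ = ∑ v ∈ J ∪ I, deg G v := (sum_union (hXI.mono_left hJ.subset)).symm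
    _ ≤ mic G := sum_deg_le_mic hJI

namespace IsVertexCritical

variable [Fintype V] [Nonempty α]

lemma exists_isSurplusSet (hG : IsVertexCritical G L) (hd : 3 ≤ d) (hL : ∀ v, d ≤ #(L v))
    (hne : IsEmpty (G ≃g (⊤ : SimpleGraph (Fin (d + 1))))) (hX : ∀ v ∈ X, deg G v = d) :
    ∃ J, IsSurplusSet G d X J := by
  classical
  exact Paper.exists_isSurplusSet (fun v hv ↦ hX v hv ▸ degIn_le_deg G X v)
    fun B hBX hB hsep ↦ hG.exists_lt_degIn_eq hd hL hne hB hsep fun v hv ↦ hX v (hBX hv)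

/-- Twice the kernel magic inequality is added to `d` times the surplus inequality, `d - 1` times
the first and once the second bound on `#I`; the edges leaving `X` cancel. -/
lemma mul_card_add_two_le_add [DecidableEq V] (hG : IsVertexCritical G L) (hd : 3 ≤ d)
    (hL : ∀ v, d ≤ #(L v)) (hne : IsEmpty (G ≃g (⊤ : SimpleGraph (Fin (d + 1)))))
    (hX : ∀ v ∈ X, deg G v = d) (hXc : ∀ v ∈ univ \ X, d < deg G v) :
    ((d : ℤ) - 2) * Fintype.card V + 2 ≤
      (d + 2) * (2 * edgeCount G - d * Fintype.card V) + (d ^ 2 - d - 1) * #(univ \ X) := by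
  obtain ⟨J, hJ⟩ := hG.exists_isSurplusSet hd hL hne hX
  obtain ⟨I, hIX, hI, hI₂, hI₃⟩ := exists_isIndepSet_card_le G (univ \ X)
  have hcard : #(univ \ X) + #X = Fintype.card V := card_sdiff_add_card_eq_card (subset_univ X)
  have hkernel : d * #J + (d + 1) * #I + d * Fintype.card V + 1 ≤
      2 * edgeCount G + Fintype.card V := by
    have hmic := hJ.mul_card_add_mul_card_le_mic (fun v hv ↦ (hX v hv).le) hI
      (disjoint_sdiff.mono_right hIX) fun v hv ↦ hXc v (hIX hv)
    have hlists : Fintype.card V * d ≤ ∑ v, #(L v) := card_nsmul_le_sum _ _ _ fun v _ ↦ hL v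
    linarith [hG.mic_add_sum_card_lt]
  have hedges : degSum G (univ \ X) + 2 * (d * #X) = 2 * edgeCount G + degSum G X := by
    have hsplit := degSum_add_degSum_sdiff G (subset_univ X)
    have hlow := degSum_add_sum_degIn_sdiff G (subset_univ X)
    rw [sum_congr rfl fun v hv ↦ (degIn_univ G v).trans (hX v hv), sum_const, smul_eq_mul] at hlow
    rw [degSum_univ] at hsplit
    linarith
  have hsurplus := hJ.degSum_le
  zify at *
  have hd₀ : (0 : ℤ) ≤ d := by positivity
  have hI₂' := mul_le_mul_of_nonneg_left hI₂ (by linarith : (0 : ℤ) ≤ d - 1)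
  have hsurplus' := mul_le_mul_of_nonneg_left hsurplus hd₀
  rw [← hcard] at hkernel ⊢
  linear_combination 2 * hkernel + hI₂' + hI₃ + hsurplus' + d * hedges

theorem mul_card_add_two_le (hG : IsVertexCritical G L) (hd : 3 ≤ d) (hL : ∀ v, d ≤ #(L v))
    (hne : IsEmpty (G ≃g (⊤ : SimpleGraph (Fin (d + 1))))) :
    ((d : ℤ) - 2) * Fintype.card V + 2 ≤
      ((d : ℤ) ^ 2 + 1) * (2 * edgeCount G - d * Fintype.card V) := by
  classical
  let X : Finset V := {v | deg G v = d}
  have hX : ∀ v ∈ X, deg G v = d := fun v hv ↦ (mem_filter.1 hv).2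
  have hXc : ∀ v ∈ univ \ X, d < deg G v := fun v hv ↦
    ((hL v).trans (hG.card_le_deg v)).lt_of_ne fun h ↦ by simp [X, h] at hv
  have hcard : #(univ \ X) + #X = Fintype.card V := card_sdiff_add_card_eq_card (subset_univ X)
  have hexcess : d * Fintype.card V + #(univ \ X) ≤ 2 * edgeCount G := by
    calc d * Fintype.card V + #(univ \ X) = #(univ \ X) • (d + 1) + #X • d := by
          rw [← hcard, smul_eq_mul, smul_eq_mul]
          ring
      _ ≤ ∑ v ∈ univ \ X, deg G v + ∑ v ∈ X, deg G v := by
        gcongr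
        · exact card_nsmul_le_sum _ _ _ hXc
        · exact card_nsmul_le_sum _ _ _ fun v hv ↦ (hX v hv).ge
      _ = 2 * edgeCount G := by rw [sum_sdiff (subset_univ X), sum_deg]
  zify at hd hexcess
  calc ((d : ℤ) - 2) * Fintype.card V + 2
    _ ≤ (d + 2) * (2 * edgeCount G - d * Fintype.card V) + (d ^ 2 - d - 1) * #(univ \ X) :=
      hG.mul_card_add_two_le_add (mod_cast hd) hL hne hX hXc
    _ ≤ (d + 2) * (2 * edgeCount G - d * Fintype.card V) +
        (d ^ 2 - d - 1) * (2 * edgeCount G - d * Fintype.card V) := by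
      gcongr
      · nlinarith
      · linarith
    _ = (d ^ 2 + 1) * (2 * edgeCount G - d * Fintype.card V) := by ring

end IsVertexCritical

end EdgeBound

end Paper

theorem stmt_1_general {V α : Type*} [Fintype V] [Nonempty α] (k : ℕ) (hk : 4 ≤ k)
    (G : SimpleGraph V) {L : V → Finset α} (hL : ∀ v, k - 1 ≤ (L v).card)
    (hG : IsVertexCritical G L)
    (hne : IsEmpty (G ≃g (⊤ : SimpleGraph (Fin k)))) :
    (2 * edgeCount G : ℚ) ≥
      ((k : ℚ) - 1 + ((k : ℚ) - 3) / ((k : ℚ) ^ 2 - 2 * k + 2)) * (Fintype.card V : ℚ) +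
        2 / ((k : ℚ) ^ 2 - 2 * k + 2) := by
  obtain ⟨d, rfl⟩ : ∃ d, k = d + 1 := ⟨k - 1, by omega⟩
  have hbound : ((d : ℚ) - 2) * Fintype.card V + 2 ≤
      ((d : ℚ) ^ 2 + 1) * (2 * edgeCount G - d * Fintype.card V) :=
    mod_cast hG.mul_card_add_two_le (by omega) hL hne
  have hden : ((d + 1 : ℕ) : ℚ) ^ 2 - 2 * (d + 1 : ℕ) + 2 = d ^ 2 + 1 := by
    push_cast
    ring
  have hpos : (0 : ℚ) < d ^ 2 + 1 := by positivity
  rw [← div_le_iff₀' hpos] at hbound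
  calc (2 * edgeCount G : ℚ) ≥ d * Fintype.card V +
        (((d : ℚ) - 2) * Fintype.card V + 2) / (d ^ 2 + 1) := by linarith
    _ = _ := by
      rw [hden]
      push_cast
      ring

/-- Every incomplete `k`-list-critical graph (`k ≥ 4`) has average degree at least
`k - 1 + (k-3)/(k²-2k+2)`. -/
theorem stmt_1 {V : Type*} [Fintype V] (k : ℕ) (hk : 4 ≤ k) (G : SimpleGraph V)
    (hcrit : ListCritical k G)
    (hne : IsEmpty (G ≃g (⊤ : SimpleGraph (Fin k)))) :
    (2 * edgeCount G : ℚ) ≥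
      ((k : ℚ) - 1 + ((k : ℚ) - 3) / ((k : ℚ) ^ 2 - 2 * k + 2)) * (Fintype.card V : ℚ) +
        2 / ((k : ℚ) ^ 2 - 2 * k + 2) := by
  obtain ⟨L, hL, hG⟩ := hcrit.exists_isVertexCritical
  exact stmt_1_general k hk G (fun v ↦ (hL v).ge) hG hne
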